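/- There exists η > 0 such that every φ ∈ C⁴(D₀) (2π-periodic in y) with ‖φ − φ⁰‖_{C⁴(D₀)} ≤ η, for which there exists a point m̃ = (m̃₁,m̃₂) with |m̃ − m̃₀| ≤ η, ∂_xφ(m̃,1) = 0, ∂_x(∂_xφ)(m̃,1) = 0 and ∂_y(∂_xφ)(m̃,1) = 0, satisfies condition (H) at (m̃,1). -/

import Mathlib

noncomputable section

/-- Partial derivative in coordinate `i` (0 = x, 1 = y, 2 = t) of a function on `ℝ × ℝ × ℝ`. -/
def pd (i : Fin 3) (f : ℝ × ℝ × ℝ → ℝ) (p : ℝ × ℝ × ℝ) : ℝ :=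
  if i = 0 then deriv (fun s => f (s, p.2.1, p.2.2)) p.1
  else if i = 1 then deriv (fun s => f (p.1, s, p.2.2)) p.2.1
  else deriv (fun s => f (p.1, p.2.1, s)) p.2.2

/-- The domain `D₀ = [−A₀, M] × ℝ × [0, 1]`. -/
def D0 (A₀ M : ℝ) : Set (ℝ × ℝ × ℝ) :=
  {p | p.1 ∈ Set.Icc (-A₀) M ∧ p.2.2 ∈ Set.Icc 0 1}

/-- `2π`-periodicity in the variable `y`. -/
def PerY (f : ℝ × ℝ × ℝ → ℝ) : Prop :=
  ∀ x y t : ℝ, f (x, y + 2 * Real.pi, t) = f (x, y, t)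

/-- Condition (H) for `φ` at the point `M̃ = (m₁, m₂, 1)`:  `∂_xφ ≥ 0` on `D₀`, vanishing
exactly at `(m₁, m₂ + 2kπ, 1)`; `∂_t∂_xφ(M̃) < 0`; `∇_{x,y}(∂_xφ)(M̃) = 0`; and the
Hessian of `∂_xφ` in `(x,y)` at `M̃` is positive definite. -/
def CondH (A₀ M : ℝ) (φ : ℝ × ℝ × ℝ → ℝ) (m₁ m₂ : ℝ) : Prop :=
  m₁ ∈ Set.Ioo (-A₀) M ∧
  (∀ p ∈ D0 A₀ M, 0 ≤ pd 0 φ p) ∧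
  (∀ p ∈ D0 A₀ M, (pd 0 φ p = 0 ↔ ∃ k : ℤ, p = (m₁, m₂ + 2 * Real.pi * k, 1))) ∧
  pd 2 (pd 0 φ) (m₁, m₂, 1) < 0 ∧
  pd 0 (pd 0 φ) (m₁, m₂, 1) = 0 ∧
  pd 1 (pd 0 φ) (m₁, m₂, 1) = 0 ∧
  (0 < pd 0 (pd 0 (pd 0 φ)) (m₁, m₂, 1) ∧
    0 < pd 0 (pd 0 (pd 0 φ)) (m₁, m₂, 1) * pd 1 (pd 1 (pd 0 φ)) (m₁, m₂, 1) -
        (pd 1 (pd 0 (pd 0 φ)) (m₁, m₂, 1)) ^ 2)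

/-- `‖φ − ψ‖_{C⁴(D₀)} ≤ η` : all derivatives of `φ − ψ` up to order 4 are `≤ η` on `D₀`. -/
def C4Close (A₀ M : ℝ) (φ ψ : ℝ × ℝ × ℝ → ℝ) (η : ℝ) : Prop :=
  ∀ i : ℕ, i ≤ 4 → ∀ p ∈ D0 A₀ M,
    ‖iteratedFDeriv ℝ i (fun q => φ q - ψ q) p‖ ≤ η

/-!
Write `f = ∂ₓφ` and `f⁰ = ∂ₓφ⁰`. At the degenerate point `f⁰` has `∂ₜf⁰ < 0` and a positive definite
Hessian in `(x, y)`; these are open conditions on second and third derivatives of `φ⁰`, so they hold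
for `f` on a fixed ball. There `f` is strictly convex on the slice `t = 1`, where it vanishes to
first order at `m̃`, and strictly decreasing in `t`; hence it is positive at every other point of
the ball with `t ≤ 1`. On the rest of one period `f⁰` is bounded below by a positive constant,
by compactness, and closeness preserves the sign. Periodicity in `y` does the rest.
-/

open Set Metric Topology

section GeneralFacts

lemma exists_pos_forall_mem_ball_of_dist_lt {X Y : Type*} [PseudoMetricSpace X]
    [PseudoMetricSpace Y] {F : X → Y} {c : X} (hF : ContinuousAt F c) {U : Set Y}
    (hU : U ∈ 𝓝 (F c)) :
    ∃ ε > 0, ∀ p ∈ ball c ε, ∀ y, dist y (F p) < ε → y ∈ U := by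
  obtain ⟨r, hr, hrU⟩ := Metric.mem_nhds_iff.1 hU
  obtain ⟨δ, hδ, hFδ⟩ := Metric.continuousAt_iff.1 hF (r / 2) (half_pos hr)
  refine ⟨min δ (r / 2), lt_min hδ (half_pos hr), fun p hp y hy => hrU ?_⟩
  calc dist y (F c) ≤ dist y (F p) + dist (F p) (F c) := dist_triangle _ _ _
    _ < r / 2 + r / 2 :=
      add_lt_add (hy.trans_le (min_le_right _ _)) (hFδ (lt_of_lt_of_le hp (min_le_left _ _)))
    _ = r := add_halves r

lemma binary_quadratic_form_pos {K : Type*} [Field K] [LinearOrder K] [IsStrictOrderedRing K]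
    {A B C a b : K} (hA : 0 < A) (hdet : 0 < A * C - B ^ 2) (hab : (a, b) ≠ 0) :
    0 < a ^ 2 * A + 2 * a * b * B + b ^ 2 * C := by
  have complete_square : A * (a ^ 2 * A + 2 * a * b * B + b ^ 2 * C) =
      (a * A + b * B) ^ 2 + b ^ 2 * (A * C - B ^ 2) := by ring
  refine pos_of_mul_pos_right ?_ hA.le
  rw [complete_square]
  rcases eq_or_ne b 0 with rfl | hb
  · have ha : a ≠ 0 := by rintro rfl; exact hab rfl
    simpa using sq_pos_of_ne_zero (mul_ne_zero ha hA.ne')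
  · positivity

lemma fderiv_lt_sub_of_fderiv_fderiv_pos {E : Type*} [NormedAddCommGroup E] [NormedSpace ℝ E]
    {f : E → ℝ} (hf : ContDiff ℝ 2 f) {c x : E}
    (hpos : ∀ p ∈ openSegment ℝ c x, 0 < fderiv ℝ (fderiv ℝ f) p (x - c) (x - c)) :
    fderiv ℝ f c (x - c) < f x - f c := by
  let γ : ℝ →ᵃ[ℝ] E := AffineMap.lineMap c x
  have hγ' (s : ℝ) : HasDerivAt γ (x - c) s := AffineMap.hasDerivAt_lineMap
  have hf' : ContDiff ℝ 1 (fderiv ℝ f) := hf.fderiv_right (by norm_num)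
  have hderiv (s : ℝ) : HasDerivAt (f ∘ γ) (fderiv ℝ f (γ s) (x - c)) s :=
    ((hf.differentiable (by norm_num) _).hasFDerivAt).comp_hasDerivAt s (hγ' s)
  have hderiv2 (s : ℝ) : HasDerivAt (fun s => fderiv ℝ f (γ s) (x - c))
      (fderiv ℝ (fderiv ℝ f) (γ s) (x - c) (x - c)) s := by
    simpa using (((hf'.differentiable (by norm_num) _).hasFDerivAt).comp_hasDerivAt s
      (hγ' s)).clm_apply (hasDerivAt_const s (x - c))
  have hconvex : StrictConvexOn ℝ (Icc 0 1) (f ∘ γ) := by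
    refine strictConvexOn_of_deriv2_pos (convex_Icc 0 1)
      (fun s _ => (hderiv s).continuousAt.continuousWithinAt) fun s hs => ?_
    rw [interior_Icc] at hs
    have hγs : γ s ∈ openSegment ℝ c x :=
      openSegment_eq_image_lineMap ℝ c x ▸ mem_image_of_mem _ hs
    calc 0 < fderiv ℝ (fderiv ℝ f) (γ s) (x - c) (x - c) := hpos _ hγs
      _ = deriv (deriv (f ∘ γ)) s := by
        rw [funext fun s => (hderiv s).deriv, (hderiv2 s).deriv]
  simpa [γ, slope_def_field] using hconvex.lt_slope_of_hasDerivAt (left_mem_Icc.2 zero_le_one)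
    (right_mem_Icc.2 zero_le_one) zero_lt_one (hderiv 0)

end GeneralFacts

section PartialDerivatives

variable {f g : ℝ × ℝ × ℝ → ℝ}

/-- The coordinate vector along which `pd i` differentiates. -/
def coordVec (i : Fin 3) : ℝ × ℝ × ℝ :=
  ![(1, 0, 0), (0, 1, 0), (0, 0, 1)] i

lemma norm_coordVec (i : Fin 3) : ‖coordVec i‖ = 1 := by
  fin_cases i <;> simp [coordVec, Prod.norm_def]

lemma pd_eq_lineDeriv (i : Fin 3) (f : ℝ × ℝ × ℝ → ℝ) (p : ℝ × ℝ × ℝ) :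
    pd i f p = lineDeriv ℝ f p (coordVec i) := by
  obtain ⟨x, y, t⟩ := p
  fin_cases i
  · simpa [pd, lineDeriv, coordVec] using
      (deriv_comp_const_add (fun s => f (s, y, t)) x 0).symm
  · simpa [pd, lineDeriv, coordVec] using
      (deriv_comp_const_add (fun s => f (x, s, t)) y 0).symm
  · simpa [pd, lineDeriv, coordVec] using
      (deriv_comp_const_add (fun s => f (x, y, s)) t 0).symm

lemma pd_eq_fderiv (i : Fin 3) (hf : Differentiable ℝ f) :
    pd i f = fun p => fderiv ℝ f p (coordVec i) :=
  funext fun p => (pd_eq_lineDeriv i f p).trans (hf p).lineDeriv_eq_fderiv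

lemma contDiff_pd (i : Fin 3) {n : ℕ} (hf : ContDiff ℝ (n + 1) f) : ContDiff ℝ n (pd i f) := by
  rw [pd_eq_fderiv i (hf.differentiable (by simp))]
  exact (hf.fderiv_right le_rfl).clm_apply contDiff_const

lemma foldr_pd_eq_iteratedFDeriv (is : List (Fin 3)) (hf : ContDiff ℝ is.length f) :
    is.foldr pd f =
      fun p => iteratedFDeriv ℝ is.length f p fun j => coordVec (is.get j) := by
  induction is with
  | nil => simp
  | cons i is ih =>
    have hdiff : Differentiable ℝ (iteratedFDeriv ℝ is.length f) :=
      hf.differentiable_iteratedFDeriv (by exact_mod_cast Nat.lt_succ_self _)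
    rw [List.foldr_cons, ih (hf.of_le (by simp)), pd_eq_fderiv i (by fun_prop)]
    funext p
    rw [fderiv_continuousMultilinear_apply_const_apply (hdiff p)]
    rfl

lemma abs_foldr_pd_sub_le (is : List (Fin 3)) (hf : ContDiff ℝ is.length f)
    (hg : ContDiff ℝ is.length g) (p : ℝ × ℝ × ℝ) :
    |is.foldr pd f p - is.foldr pd g p| ≤
      ‖iteratedFDeriv ℝ is.length (fun q => f q - g q) p‖ := by
  rw [foldr_pd_eq_iteratedFDeriv is hf, foldr_pd_eq_iteratedFDeriv is hg,
    fun_iteratedFDeriv_sub_apply hf.contDiffAt hg.contDiffAt, ← Real.norm_eq_abs]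
  simpa [norm_coordVec] using
    (iteratedFDeriv ℝ is.length f p - iteratedFDeriv ℝ is.length g p).le_opNorm
      fun j => coordVec (is.get j)

lemma pd_pd_eq_fderiv_fderiv (j i : Fin 3) (hf : ContDiff ℝ 2 f) (p : ℝ × ℝ × ℝ) :
    pd j (pd i f) p = fderiv ℝ (fderiv ℝ f) p (coordVec j) (coordVec i) :=
  (congrFun (foldr_pd_eq_iteratedFDeriv [j, i] hf) p).trans (iteratedFDeriv_two_apply ..)

lemma fderiv_fderiv_apply_horizontal (hf : ContDiff ℝ 2 f) (p : ℝ × ℝ × ℝ) (a b : ℝ) :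
    fderiv ℝ (fderiv ℝ f) p (a, b, 0) (a, b, 0) =
      a ^ 2 * pd 0 (pd 0 f) p + 2 * a * b * pd 1 (pd 0 f) p + b ^ 2 * pd 1 (pd 1 f) p := by
  have hab : ((a, b, 0) : ℝ × ℝ × ℝ) = a • coordVec 0 + b • coordVec 1 := by simp [coordVec]
  have hsymm := (hf.contDiffAt (x := p)).isSymmSndFDerivAt (by simp) (coordVec 0) (coordVec 1)
  simp only [pd_pd_eq_fderiv_fderiv _ _ hf, hab, map_add, map_smul, add_apply, smul_apply,
    smul_eq_mul, hsymm]
  ring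

end PartialDerivatives

section Periodicity

lemma PerY.pd {f : ℝ × ℝ × ℝ → ℝ} (hf : PerY f) (i : Fin 3) : PerY (pd i f) := by
  intro x y t
  simp only [pd_eq_lineDeriv, lineDeriv, Prod.add_def, add_right_comm y, hf _ _ _]

lemma PerY.add_two_pi_mul_int {f : ℝ × ℝ × ℝ → ℝ} (hf : PerY f) (x y t : ℝ) (k : ℤ) :
    f (x, y + 2 * Real.pi * k, t) = f (x, y, t) := by
  have hper : Function.Periodic (fun s => f (x, s, t)) (2 * Real.pi) := fun s => hf x s t
  simpa [mul_comm] using hper.int_mul k y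

/-- One closed period of `D0 A₀ M` in the variable `y`, centred at `y = b`. -/
def periodCell (A₀ M b : ℝ) : Set (ℝ × ℝ × ℝ) :=
  Icc (-A₀) M ×ˢ Icc (b - Real.pi) (b + Real.pi) ×ˢ Icc 0 1

variable {A₀ M b : ℝ}

lemma periodCell_subset_D0 : periodCell A₀ M b ⊆ D0 A₀ M := fun _ hp => ⟨hp.1, hp.2.2⟩

lemma isCompact_periodCell : IsCompact (periodCell A₀ M b) :=
  isCompact_Icc.prod (isCompact_Icc.prod isCompact_Icc)

lemma exists_translate_mem_periodCell {x y t : ℝ} (hp : (x, y, t) ∈ D0 A₀ M) (b : ℝ) :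
    ∃ k : ℤ, (x, y + 2 * Real.pi * k, t) ∈ periodCell A₀ M b := by
  obtain ⟨k, hk, -⟩ := existsUnique_add_zsmul_mem_Ico Real.two_pi_pos y (b - Real.pi)
  rw [zsmul_eq_mul, mul_comm (k : ℝ)] at hk
  exact ⟨k, hp.1, ⟨hk.1, by linarith [hk.2]⟩, hp.2⟩

lemma PerY.nonneg_and_eq_zero_iff {f : ℝ × ℝ × ℝ → ℝ} (hf : PerY f) {m₁ m₂ τ : ℝ}
    (hzero : f (m₁, m₂, τ) = 0) (hpos : ∀ p ∈ periodCell A₀ M b, p ≠ (m₁, m₂, τ) → 0 < f p)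
    {p : ℝ × ℝ × ℝ} (hp : p ∈ D0 A₀ M) :
    0 ≤ f p ∧ (f p = 0 ↔ ∃ k : ℤ, p = (m₁, m₂ + 2 * Real.pi * k, τ)) := by
  obtain ⟨x, y, t⟩ := p
  by_cases htrans : ∃ k : ℤ, (x, y, t) = (m₁, m₂ + 2 * Real.pi * k, τ)
  · have hfp : f (x, y, t) = 0 := by
      obtain ⟨k, hk⟩ := htrans
      rw [hk, hf.add_two_pi_mul_int, hzero]
    exact ⟨hfp.ge, iff_of_true hfp htrans⟩
  · have hfp : 0 < f (x, y, t) := by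
      obtain ⟨k, hk⟩ := exists_translate_mem_periodCell hp b
      rw [← hf.add_two_pi_mul_int x y t k]
      refine hpos _ hk fun heq => htrans ⟨-k, ?_⟩
      simp only [Prod.mk.injEq] at heq ⊢
      exact ⟨heq.1, by push_cast; linarith [heq.2.1], heq.2.2⟩
    exact ⟨hfp.le, iff_of_false hfp.ne' htrans⟩

lemma CondH.eq_of_mem_periodCell {φ : ℝ × ℝ × ℝ → ℝ} {m₁ m₂ : ℝ} (hH : CondH A₀ M φ m₁ m₂)
    {p : ℝ × ℝ × ℝ} (hp : p ∈ periodCell A₀ M m₂) (hzero : pd 0 φ p = 0) :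
    p = (m₁, m₂, 1) := by
  obtain ⟨-, -, hzeros, -⟩ := hH
  obtain ⟨k, rfl⟩ := (hzeros p (periodCell_subset_D0 hp)).1 hzero
  have hk : |(k : ℝ)| < 1 := by
    have hy := hp.2.1
    rw [abs_lt]
    constructor <;> nlinarith [hy.1, hy.2, Real.pi_pos]
  have hk0 : k = 0 := Int.abs_lt_one_iff.1 (by exact_mod_cast hk)
  simp [hk0]

lemma CondH.exists_pos_le_of_notMem_ball {φ : ℝ × ℝ × ℝ → ℝ} {m₁ m₂ : ℝ}
    (hH : CondH A₀ M φ m₁ m₂) (hφ : Continuous (pd 0 φ)) {ε : ℝ} (hε : 0 < ε) :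
    ∃ δ > 0, ∀ p ∈ periodCell A₀ M m₂ \ ball (m₁, m₂, 1) ε, δ ≤ pd 0 φ p := by
  refine (isCompact_periodCell.diff isOpen_ball).exists_forall_le' hφ.continuousOn ?_
  rintro p ⟨hp, hfar⟩
  refine (hH.2.1 p (periodCell_subset_D0 hp)).lt_of_ne' fun hzero => hfar ?_
  rw [hH.eq_of_mem_periodCell hp hzero]
  exact mem_ball_self hε

end Periodicity

section Jets

/-- The derivatives `(∂ₜf, ∂ₓ²f, ∂ₓ∂ᵧf, ∂ᵧ²f)` that enter condition (H), for `f = ∂ₓφ`. -/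
def jet (f : ℝ × ℝ × ℝ → ℝ) (p : ℝ × ℝ × ℝ) : ℝ × ℝ × ℝ × ℝ :=
  (pd 2 f p, pd 0 (pd 0 f) p, pd 1 (pd 0 f) p, pd 1 (pd 1 f) p)

/-- The values of `jet` allowed by condition (H): negative `t`-derivative and positive definite
Hessian in `(x, y)`. -/
def nondegenerateJets : Set (ℝ × ℝ × ℝ × ℝ) :=
  {j | j.1 < 0 ∧ 0 < j.2.1 ∧ 0 < j.2.1 * j.2.2.2 - j.2.2.1 ^ 2}

lemma CondH.jet_mem_nondegenerateJets {A₀ M m₁ m₂ : ℝ} {φ : ℝ × ℝ × ℝ → ℝ}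
    (hH : CondH A₀ M φ m₁ m₂) : jet (pd 0 φ) (m₁, m₂, 1) ∈ nondegenerateJets := by
  obtain ⟨-, -, -, ht, -, -, hxx, hdet⟩ := hH
  exact ⟨ht, hxx, hdet⟩

lemma isOpen_nondegenerateJets : IsOpen nondegenerateJets := by
  unfold nondegenerateJets
  exact (isOpen_lt (by fun_prop) (by fun_prop)).and
    ((isOpen_lt (by fun_prop) (by fun_prop)).and (isOpen_lt (by fun_prop) (by fun_prop)))

variable {f : ℝ × ℝ × ℝ → ℝ}

lemma continuous_jet (hf : ContDiff ℝ 2 f) : Continuous (jet f) := by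
  have hpd (i : Fin 3) : ContDiff ℝ 1 (pd i f) := contDiff_pd (n := 1) i hf
  have hpd2 (j i : Fin 3) : Continuous (pd j (pd i f)) :=
    (contDiff_pd (n := 0) j (by simpa using hpd i)).continuous
  exact (hpd 2).continuous.prodMk ((hpd2 0 0).prodMk ((hpd2 1 0).prodMk (hpd2 1 1)))

lemma dist_jet_pd_zero_le {φ ψ : ℝ × ℝ × ℝ → ℝ} (hφ : ContDiff ℝ 3 φ) (hψ : ContDiff ℝ 3 ψ)
    {p : ℝ × ℝ × ℝ} {η : ℝ} (h2 : ‖iteratedFDeriv ℝ 2 (fun q => φ q - ψ q) p‖ ≤ η)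
    (h3 : ‖iteratedFDeriv ℝ 3 (fun q => φ q - ψ q) p‖ ≤ η) :
    dist (jet (pd 0 φ) p) (jet (pd 0 ψ) p) ≤ η := by
  have hthird (k j i : Fin 3) : |pd k (pd j (pd i φ)) p - pd k (pd j (pd i ψ)) p| ≤ η :=
    (abs_foldr_pd_sub_le [k, j, i] hφ hψ p).trans h3
  have hsecond : |pd 2 (pd 0 φ) p - pd 2 (pd 0 ψ) p| ≤ η :=
    (abs_foldr_pd_sub_le [2, 0] (hφ.of_le (by norm_num)) (hψ.of_le (by norm_num)) p).trans h2
  simp only [jet, Prod.dist_eq, Real.dist_eq, max_le_iff]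
  exact ⟨hsecond, hthird 0 0 0, hthird 1 0 0, hthird 1 1 0⟩

variable {U : Set (ℝ × ℝ × ℝ)} {a b τ x y t : ℝ}

lemma lt_of_jet_mem_nondegenerateJets_of_slice (hU : Convex ℝ U) (hf : ContDiff ℝ 2 f)
    (hjet : ∀ p ∈ U, jet f p ∈ nondegenerateJets) (hc : (a, b, τ) ∈ U)
    (hx : pd 0 f (a, b, τ) = 0) (hy : pd 1 f (a, b, τ) = 0) (hp : (x, y, τ) ∈ U)
    (hne : (x, y) ≠ (a, b)) : f (a, b, τ) < f (x, y, τ) := by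
  have hdisp : ((x, y, τ) : ℝ × ℝ × ℝ) - (a, b, τ) = (x - a, y - b, 0) := by simp
  have hcrit : fderiv ℝ f (a, b, τ) (x - a, y - b, 0) = 0 := by
    have hcoord : ((x - a, y - b, 0) : ℝ × ℝ × ℝ) =
        (x - a) • coordVec 0 + (y - b) • coordVec 1 := by simp [coordVec]
    simp only [pd_eq_fderiv _ (hf.differentiable (by norm_num))] at hx hy
    rw [hcoord, map_add, map_smul, map_smul, hx, hy, smul_zero, smul_zero, add_zero]
  have hgrowth : fderiv ℝ f (a, b, τ) ((x, y, τ) - (a, b, τ)) < f (x, y, τ) - f (a, b, τ) := by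
    refine fderiv_lt_sub_of_fderiv_fderiv_pos hf fun p hp' => ?_
    obtain ⟨-, hxx, hdet⟩ := hjet p (hU.openSegment_subset hc hp hp')
    rw [hdisp, fderiv_fderiv_apply_horizontal hf]
    exact binary_quadratic_form_pos hxx hdet (sub_ne_zero.2 hne)
  rwa [hdisp, hcrit, sub_pos] at hgrowth

lemma strictAntiOn_of_pd_two_neg (hU : Convex ℝ U) (hf : Continuous f)
    (hneg : ∀ p ∈ U, pd 2 f p < 0) :
    StrictAntiOn (fun s => f (x, y, s)) {s | (x, y, s) ∈ U} := by
  refine strictAntiOn_of_deriv_neg ?_ (by fun_prop) fun s hs => ?_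
  · intro s hs s' hs' α β hα hβ hαβ
    simpa [← add_mul, hαβ] using hU hs hs' hα hβ hαβ
  · simpa [pd] using hneg (x, y, s) (interior_subset hs :)

lemma lt_of_jet_mem_nondegenerateJets (hU : Convex ℝ U) (hf : ContDiff ℝ 2 f)
    (hjet : ∀ p ∈ U, jet f p ∈ nondegenerateJets) (hc : (a, b, τ) ∈ U)
    (hx : pd 0 f (a, b, τ) = 0) (hy : pd 1 f (a, b, τ) = 0) (hp : (x, y, t) ∈ U)
    (hpτ : (x, y, τ) ∈ U) (ht : t ≤ τ) (hne : (x, y, t) ≠ (a, b, τ)) :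
    f (a, b, τ) < f (x, y, t) := by
  have hanti : StrictAntiOn (fun s => f (x, y, s)) {s | (x, y, s) ∈ U} :=
    strictAntiOn_of_pd_two_neg hU hf.continuous fun p hp => (hjet p hp).1
  by_cases hxy : (x, y) = (a, b)
  · obtain ⟨rfl, rfl⟩ := Prod.mk.inj hxy
    exact hanti hp hpτ (ht.lt_of_ne fun h => hne (by rw [h]))
  · exact (lt_of_jet_mem_nondegenerateJets_of_slice hU hf hjet hc hx hy hpτ hxy).trans_le
      (hanti.antitoneOn hp hpτ ht)

end Jets

lemma convex_D0 (A₀ M : ℝ) : Convex ℝ (D0 A₀ M) :=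
  fun _ hp _ hq _ _ hα hβ hαβ =>
    ⟨convex_Icc (-A₀) M hp.1 hq.1 hα hβ hαβ, convex_Icc 0 1 hp.2 hq.2 hα hβ hαβ⟩

lemma condH_of_jet_mem_nondegenerateJets {A₀ M ε b₁ b₂ m₁ m₂ : ℝ} {φ : ℝ × ℝ × ℝ → ℝ}
    (hφ : ContDiff ℝ 3 φ) (hper : PerY φ)
    (hjet : ∀ p ∈ D0 A₀ M ∩ ball (b₁, b₂, 1) ε, jet (pd 0 φ) p ∈ nondegenerateJets)
    (hfar : ∀ p ∈ periodCell A₀ M b₂ \ ball (b₁, b₂, 1) ε, 0 < pd 0 φ p)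
    (hm : m₁ ∈ Ioo (-A₀) M) (hmball : (m₁, m₂, 1) ∈ ball ((b₁, b₂, 1) : ℝ × ℝ × ℝ) ε)
    (hzero : pd 0 φ (m₁, m₂, 1) = 0) (hx : pd 0 (pd 0 φ) (m₁, m₂, 1) = 0)
    (hy : pd 1 (pd 0 φ) (m₁, m₂, 1) = 0) : CondH A₀ M φ m₁ m₂ := by
  have hmU : (m₁, m₂, 1) ∈ D0 A₀ M ∩ ball (b₁, b₂, 1) ε :=
    ⟨⟨Ioo_subset_Icc_self hm, by simp⟩, hmball⟩
  have hpos : ∀ p ∈ periodCell A₀ M b₂, p ≠ (m₁, m₂, 1) → 0 < pd 0 φ p := by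
    rintro ⟨x, y, t⟩ hp hne
    by_cases hball : (x, y, t) ∈ ball ((b₁, b₂, 1) : ℝ × ℝ × ℝ) ε
    · have hpD := periodCell_subset_D0 hp
      have htop : (x, y, 1) ∈ ball ((b₁, b₂, 1) : ℝ × ℝ × ℝ) ε := by
        simp only [← ball_prod_same, mem_prod] at hball ⊢
        exact ⟨hball.1, hball.2.1, mem_ball_self (dist_nonneg.trans_lt hball.1)⟩
      exact hzero ▸ lt_of_jet_mem_nondegenerateJets ((convex_D0 A₀ M).inter (convex_ball _ ε))
        (contDiff_pd (n := 2) 0 hφ) hjet hmU hx hy ⟨hpD, hball⟩ ⟨⟨hpD.1, by simp⟩, htop⟩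
        hpD.2.2 hne
    · exact hfar _ ⟨hp, hball⟩
  obtain ⟨ht, hxx, hdet⟩ := hjet _ hmU
  exact ⟨hm, fun p hp => ((hper.pd 0).nonneg_and_eq_zero_iff hzero hpos hp).1,
    fun p hp => ((hper.pd 0).nonneg_and_eq_zero_iff hzero hpos hp).2, ht, hx, hy, hxx, hdet⟩

theorem fundamental_lemma_i_general {A₀ M m01 m02 : ℝ} {φ0 : ℝ × ℝ × ℝ → ℝ}
    (hφ0 : ContDiff ℝ 3 φ0) (hφ0H : CondH A₀ M φ0 m01 m02) :
    ∃ η : ℝ, 0 < η ∧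
      ∀ φ : ℝ × ℝ × ℝ → ℝ, ContDiff ℝ 3 φ → PerY φ →
        (∀ i ≤ 3, ∀ p ∈ D0 A₀ M, ‖iteratedFDeriv ℝ i (fun q => φ q - φ0 q) p‖ ≤ η) →
        ∀ m₁ m₂ : ℝ, |m₁ - m01| ≤ η → |m₂ - m02| ≤ η →
          pd 0 φ (m₁, m₂, 1) = 0 →
          pd 0 (pd 0 φ) (m₁, m₂, 1) = 0 →
          pd 1 (pd 0 φ) (m₁, m₂, 1) = 0 →
          CondH A₀ M φ m₁ m₂ := by
  have hf0 : ContDiff ℝ 2 (pd 0 φ0) := contDiff_pd (n := 2) 0 hφ0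
  obtain ⟨r, hr, hball⟩ := Metric.isOpen_iff.1 isOpen_Ioo m01 hφ0H.1
  obtain ⟨ε, hε, hjet⟩ := exists_pos_forall_mem_ball_of_dist_lt
    (continuous_jet hf0).continuousAt (isOpen_nondegenerateJets.mem_nhds
      hφ0H.jet_mem_nondegenerateJets)
  obtain ⟨δ, hδ, hfar⟩ := hφ0H.exists_pos_le_of_notMem_ball hf0.continuous hε
  obtain ⟨η, hη, hη'⟩ := exists_between (lt_min hr (lt_min hε hδ))
  obtain ⟨hηr, hηε, hηδ⟩ : η < r ∧ η < ε ∧ η < δ := by simpa only [lt_min_iff] using hη'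
  refine ⟨η, hη, fun φ hφ hper hclose m₁ m₂ hm₁ hm₂ hzero hx hy => ?_⟩
  refine condH_of_jet_mem_nondegenerateJets hφ hper (fun p hp => hjet p hp.2 _ ?_)
    (fun p hp => ?_) (hball (hm₁.trans_lt hηr)) ?_ hzero hx hy
  · exact (dist_jet_pd_zero_le hφ hφ0 (hclose 2 (by norm_num) p hp.1)
      (hclose 3 le_rfl p hp.1)).trans_lt hηε
  · have hpd : |pd 0 φ p - pd 0 φ0 p| ≤ η :=
      (abs_foldr_pd_sub_le [0] (hφ.of_le (by norm_num)) (hφ0.of_le (by norm_num)) p).trans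
        (hclose 1 (by norm_num) p (periodCell_subset_D0 hp.1))
    linarith [hfar p hp, (abs_le.1 hpd).1]
  · simp only [← ball_prod_same, mem_prod]
    exact ⟨hm₁.trans_lt hηε, hm₂.trans_lt hηε, mem_ball_self hε⟩

/-- **Fundamental Lemma III.3.2 i)**: if `φ` is `C⁴`-close to `φ⁰` and at some `m̃` close to
`m̃₀` one has `∂_xφ(m̃,1) = 0` and `∇_{x,y}(∂_xφ)(m̃,1) = 0`, then `φ` satisfies condition (H)
at `(m̃, 1)`. -/
theorem fundamental_lemma_i (A₀ M : ℝ) (hAM : -A₀ < M)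
    (φ0 : ℝ × ℝ × ℝ → ℝ) (m01 m02 : ℝ)
    (hφ0 : ContDiff ℝ (⊤ : ℕ∞) φ0) (hφ0per : PerY φ0) (hφ0H : CondH A₀ M φ0 m01 m02) :
    ∃ η : ℝ, 0 < η ∧
      ∀ φ : ℝ × ℝ × ℝ → ℝ, ContDiff ℝ 4 φ → PerY φ → C4Close A₀ M φ φ0 η →
        ∀ m₁ m₂ : ℝ, |m₁ - m01| ≤ η → |m₂ - m02| ≤ η →
          pd 0 φ (m₁, m₂, 1) = 0 →
          pd 0 (pd 0 φ) (m₁, m₂, 1) = 0 →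
          pd 1 (pd 0 φ) (m₁, m₂, 1) = 0 →
          CondH A₀ M φ m₁ m₂ := by
  obtain ⟨η, hη, hcond⟩ := fundamental_lemma_i_general (contDiff_infty.1 hφ0 3) hφ0H
  exact ⟨η, hη, fun φ hφ hper hclose => hcond φ (hφ.of_le (by norm_num)) hper
    fun i hi => hclose i (hi.trans (by norm_num))⟩

end
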